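/- Under the system model with MRC, for every k ∈ {1,…,K}, E[‖v_{jk}(t)‖²] = N λ_{jjk}² · x̃_{jk}ᴴ D_{δ(t)} Ψ_j⁻¹ D_{δ(t)}ᴴ x̃_{jk}. -/

import Mathlib

open MeasureTheory ProbabilityTheory Matrix Complex
open scoped ProbabilityTheory Kronecker

/-- Deterministic phase-drift damping matrix
`D_{δ(t)} = diag(e^{−δ(t−1)/2}, …, e^{−δ(t−B)/2})`; the `b`-th diagonal entry
(`b : Fin B`, corresponding to pilot time `b+1`) is `e^{−δ(t−(b+1))/2}`. -/
noncomputable def Dmat (δ : ℝ) (t B : ℕ) : Matrix (Fin B) (Fin B) ℂ :=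
  Matrix.diagonal fun b => (Real.exp (-(δ / 2) * ((t : ℝ) - ((b : ℕ) + 1))) : ℂ)

/-- Deterministic pilot matrix `X_{ℓm}` built from the pilot sequence `xv`:
diagonal entries `|x(b)|²(1+κ²)` and off-diagonal entries `x(b₁)x(b₂)* e^{−δ|b₁−b₂|/2}`. -/
noncomputable def Xmat {B : ℕ} (κ δ : ℝ) (xv : Fin B → ℂ) : Matrix (Fin B) (Fin B) ℂ :=
  Matrix.of fun b₁ b₂ =>
    if b₁ = b₂ then ((Complex.normSq (xv b₁) * (1 + κ ^ 2) : ℝ) : ℂ)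
    else xv b₁ * star (xv b₂) * (Real.exp (-(δ / 2) * |((b₁ : ℕ) : ℝ) - ((b₂ : ℕ) : ℝ)|) : ℂ)

/-- Deterministic matrix `Ψ_j = Σ_ℓ Σ_m λ_{jℓm} X_{ℓm} + σ²ξ I_B`. -/
noncomputable def PsiMat {B L K : ℕ} (lam : Fin L → Fin K → ℝ) (σ2 ξ κ δ : ℝ)
    (x : Fin L → Fin K → Fin B → ℂ) : Matrix (Fin B) (Fin B) ℂ :=
  (∑ l, ∑ m, ((lam l m : ℝ) : ℂ) • Xmat κ δ (x l m)) + ((σ2 * ξ : ℝ) : ℂ) • 1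

/-- The uplink massive MIMO system model at base station `j`, on the probability space `Ω`,
with `N` antennas, pilot length `B`, `L` cells, `K` users per cell, channel attenuations
`lam l k = λ_{jlk}`, noise variance `σ2 = σ²`, noise amplification `ξ`, distortion parameter
`κ`, phase-drift variance `δ`, and deterministic pilot sequences `x l k : Fin B → ℂ`
(pilot time `b+1` for `b : Fin B`).  All underlying real random sources are mutually
independent: channel real/imaginary parts `hRe, hIm ~ N(0, λ_{jlk}/2)` (so the channel
coefficients are `CN(0, λ_{jlk})`), phase-drift increments `dphi n u ~ N(0, δ)` (`u ≥ 1`),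
distortion real/imaginary parts `zRe, zIm ~ N(0, 1/2)` (so `z ~ CN(0,1)`), and receiver-noise
real/imaginary parts `etaRe, etaIm ~ N(0, σ²ξ/2)` (so `η ~ CN(0, σ²ξ)`). -/
structure MIMOModel (Ω : Type*) [MeasureSpace Ω] (N B L K : ℕ)
    (lam : Fin L → Fin K → ℝ) (σ2 ξ κ δ : ℝ) (x : Fin L → Fin K → Fin B → ℂ) where
  hRe : Fin L → Fin K → Fin N → Ω → ℝ
  hIm : Fin L → Fin K → Fin N → Ω → ℝ
  dphi : Fin N → ℕ → Ω → ℝ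
  zRe : Fin N → ℕ → Ω → ℝ
  zIm : Fin N → ℕ → Ω → ℝ
  etaRe : Fin N → ℕ → Ω → ℝ
  etaIm : Fin N → ℕ → Ω → ℝ
  meas_hRe : ∀ l k n, Measurable (hRe l k n)
  meas_hIm : ∀ l k n, Measurable (hIm l k n)
  meas_dphi : ∀ n u, Measurable (dphi n u)
  meas_zRe : ∀ n s, Measurable (zRe n s)
  meas_zIm : ∀ n s, Measurable (zIm n s)
  meas_etaRe : ∀ n s, Measurable (etaRe n s)
  meas_etaIm : ∀ n s, Measurable (etaIm n s)
  law_hRe : ∀ l k n, Measure.map (hRe l k n) ℙ = gaussianReal 0 (Real.toNNReal (lam l k / 2))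
  law_hIm : ∀ l k n, Measure.map (hIm l k n) ℙ = gaussianReal 0 (Real.toNNReal (lam l k / 2))
  law_dphi : ∀ n u, Measure.map (dphi n u) ℙ = gaussianReal 0 (Real.toNNReal δ)
  law_zRe : ∀ n s, Measure.map (zRe n s) ℙ = gaussianReal 0 (Real.toNNReal (1 / 2))
  law_zIm : ∀ n s, Measure.map (zIm n s) ℙ = gaussianReal 0 (Real.toNNReal (1 / 2))
  law_etaRe : ∀ n s, Measure.map (etaRe n s) ℙ = gaussianReal 0 (Real.toNNReal (σ2 * ξ / 2))
  law_etaIm : ∀ n s, Measure.map (etaIm n s) ℙ = gaussianReal 0 (Real.toNNReal (σ2 * ξ / 2))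
  indep : iIndepFun (m := fun _ => (inferInstance : MeasurableSpace ℝ))
    (fun i : (Fin L × Fin K × Fin N × Bool) ⊕ (Fin N × ℕ) ⊕ (Fin N × ℕ × Bool) ⊕
        (Fin N × ℕ × Bool) =>
      match i with
      | Sum.inl (l, k, n, false) => hRe l k n
      | Sum.inl (l, k, n, true) => hIm l k n
      | Sum.inr (Sum.inl (n, u)) => dphi n u
      | Sum.inr (Sum.inr (Sum.inl (n, s, false))) => zRe n s
      | Sum.inr (Sum.inr (Sum.inl (n, s, true))) => zIm n s
      | Sum.inr (Sum.inr (Sum.inr (n, s, false))) => etaRe n s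
      | Sum.inr (Sum.inr (Sum.inr (n, s, true))) => etaIm n s) (ℙ : Measure Ω)

namespace MIMOModel

variable {Ω : Type*} [MeasureSpace Ω] {N B L K : ℕ} {lam : Fin L → Fin K → ℝ}
  {σ2 ξ κ δ : ℝ} {x : Fin L → Fin K → Fin B → ℂ}

variable (M : MIMOModel Ω N B L K lam σ2 ξ κ δ x)

/-- Accumulated phase drift `φ_{jn}(s) = Σ_{u=1}^{s} Δ_{jn}(u)`. -/
noncomputable def phase (n : Fin N) (s : ℕ) (ω : Ω) : ℝ :=
  ∑ u ∈ Finset.Icc 1 s, M.dphi n u ω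

/-- Channel coefficient `h_{jlk}^{(n)} ~ CN(0, λ_{jlk})`. -/
noncomputable def ch (l : Fin L) (k : Fin K) (n : Fin N) (ω : Ω) : ℂ :=
  Complex.mk (M.hRe l k n ω) (M.hIm l k n ω)

/-- Distortion variable `z_{jn}(s) ~ CN(0,1)`. -/
noncomputable def z (n : Fin N) (s : ℕ) (ω : Ω) : ℂ :=
  Complex.mk (M.zRe n s ω) (M.zIm n s ω)

/-- Receiver noise `η_j^{(n)}(s) ~ CN(0, σ²ξ)`. -/
noncomputable def eta (n : Fin N) (s : ℕ) (ω : Ω) : ℂ :=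
  Complex.mk (M.etaRe n s ω) (M.etaIm n s ω)

/-- Received pilot signal at antenna `n`, pilot time `b+1` (for `b : Fin B`):
`y_j^{(n)}(b) = e^{iφ_{jn}(b)} Σ_l Σ_m h_{jlm}^{(n)} x_{lm}(b)
  + κ (Σ_l Σ_m |x_{lm}(b)|² |h_{jlm}^{(n)}|²)^{1/2} z_{jn}(b) + η_j^{(n)}(b)`. -/
noncomputable def y (n : Fin N) (b : Fin B) (ω : Ω) : ℂ :=
  Complex.exp (Complex.I * ((M.phase n ((b : ℕ) + 1) ω : ℝ) : ℂ))
      * ∑ l, ∑ m, M.ch l m n ω * x l m b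
    + (κ : ℂ) * ((Real.sqrt (∑ l, ∑ m, Complex.normSq (x l m b)
        * Complex.normSq (M.ch l m n ω)) : ℝ) : ℂ) * M.z n ((b : ℕ) + 1) ω
    + M.eta n ((b : ℕ) + 1) ω

/-- Effective channel at time `t`: `h_{jlk}(t)` has `n`-th entry `e^{iφ_{jn}(t)} h_{jlk}^{(n)}`. -/
noncomputable def hEff (l : Fin L) (k : Fin K) (t : ℕ) (n : Fin N) (ω : Ω) : ℂ :=
  Complex.exp (Complex.I * ((M.phase n t ω : ℝ) : ℂ)) * M.ch l k n ω

/-- LMMSE channel estimate `ĥ_{jlk}(t) = λ_{jlk} Σ_b c_b y_j(b)` with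
`(c_1, …, c_B) = x̃_{lk}ᴴ D_{δ(t)} Ψ_j⁻¹`. -/
noncomputable def hHat (l : Fin L) (k : Fin K) (t : ℕ) (n : Fin N) (ω : Ω) : ℂ :=
  ((lam l k : ℝ) : ℂ) * ∑ b,
    Matrix.vecMul (star (x l k)) (Dmat δ t B * (PsiMat lam σ2 ξ κ δ x)⁻¹) b * M.y n b ω

/-- Data-phase distortion noise `υ_j(t)` with `n`-th entry
`κ (Σ_l Σ_m p_{lm} |h_{jlm}^{(n)}|²)^{1/2} z_{jn}(t)`. -/
noncomputable def ups (p : Fin L → Fin K → ℝ) (t : ℕ) (n : Fin N) (ω : Ω) : ℂ :=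
  (κ : ℂ) * ((Real.sqrt (∑ l, ∑ m, p l m * Complex.normSq (M.ch l m n ω)) : ℝ) : ℂ)
    * M.z n t ω

/-- The uplink SINR of user `k` in cell `j` at time `t` with the MRC filter
`v_{jk}(t) = ĥ_{jjk}(t)`. -/
noncomputable def SINR (p : Fin L → Fin K → ℝ) (j : Fin L) (k : Fin K) (t : ℕ) : ℝ :=
  p j k * Complex.normSq (∫ ω, ∑ n, star (M.hHat j k t n ω) * M.hEff j k t n ω) /
    ((∑ l, ∑ m, p l m * ∫ ω, Complex.normSq (∑ n, star (M.hHat j k t n ω) * M.hEff l m t n ω))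
      - p j k * Complex.normSq (∫ ω, ∑ n, star (M.hHat j k t n ω) * M.hEff j k t n ω)
      + (∫ ω, Complex.normSq (∑ n, star (M.hHat j k t n ω) * M.ups p t n ω))
      + σ2 * ξ * ∫ ω, ∑ n, Complex.normSq (M.hHat j k t n ω))

end MIMOModel

namespace MIMOModel
section helpers

/-- The σ-algebra generated by a sub-family. -/
abbrev sig {Ω ι : Type*} (F : ι → Ω → ℝ) (S : Set ι) : MeasurableSpace Ω :=
  ⨆ i ∈ S, MeasurableSpace.comap (F i) inferInstance

lemma sig_meas {Ω ι : Type*} (F : ι → Ω → ℝ) {S : Set ι} {i : ι} (hi : i ∈ S) :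
    Measurable[sig F S] (F i) := by
  have : MeasurableSpace.comap (F i) inferInstance ≤ sig F S :=
    le_iSup₂_of_le (f := fun i (_ : i ∈ S) => MeasurableSpace.comap (F i) inferInstance) i hi le_rfl
  exact measurable_iff_comap_le.2 this

lemma sig_indep {Ω ι : Type*} [MeasurableSpace Ω] {μ : Measure Ω} {F : ι → Ω → ℝ}
    (hF : ∀ i, Measurable (F i)) (h : iIndepFun F μ) (S T : Set ι) (hST : Disjoint S T)
    {U V : Ω → ℂ} (hU : Measurable[sig F S] U) (hV : Measurable[sig F T] V) :
    IndepFun U V μ := by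
  rw [IndepFun_iff_Indep]
  have := indep_iSup_of_disjoint (fun i => (hF i).comap_le) h.iIndep hST
  exact indep_of_indep_of_le_left (indep_of_indep_of_le_right this hV.comap_le) hU.comap_le

lemma cn_memLp {Ω : Type*} [MeasurableSpace Ω] {μ : Measure Ω} {X Y : Ω → ℝ} {v : NNReal}
    (hX : Measurable X) (hY : Measurable Y)
    (lX : μ.map X = gaussianReal 0 v) (lY : μ.map Y = gaussianReal 0 v) :
    MemLp (fun ω => Complex.mk (X ω) (Y ω)) 2 μ := by
  have aux : ∀ Z : Ω → ℝ, Measurable Z → μ.map Z = gaussianReal 0 v → MemLp Z 2 μ := by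
    intro Z hZ lZ
    have := memLp_id_gaussianReal (μ := 0) (v := v) 2
    rw [← lZ] at this
    exact (memLp_map_measure_iff (by fun_prop) hZ.aemeasurable).1 this
  rw [← memLp_re_im_iff]
  exact ⟨aux X hX lX, aux Y hY lY⟩

lemma g_mean {Ω : Type*} [MeasurableSpace Ω] {μ : Measure Ω} {v : NNReal} {Z : Ω → ℝ}
    (hZ : Measurable Z) (lZ : μ.map Z = gaussianReal 0 v) : ∫ ω, Z ω ∂μ = 0 := by
  have := integral_map (μ := μ) hZ.aemeasurable (f := fun x : ℝ => x) (by fun_prop)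
  rw [← this, lZ, integral_id_gaussianReal]

lemma g_sq {Ω : Type*} [MeasurableSpace Ω] {μ : Measure Ω} {v : NNReal} {Z : Ω → ℝ}
    (hZ : Measurable Z) (lZ : μ.map Z = gaussianReal 0 v) : ∫ ω, Z ω ^ 2 ∂μ = v := by
  have := integral_map (μ := μ) hZ.aemeasurable (f := fun x : ℝ => x ^ 2) (by fun_prop)
  rw [← this, lZ]
  have h := variance_fun_id_gaussianReal (μ := 0) (v := v)
  rw [variance_eq_integral (by fun_prop), integral_id_gaussianReal] at h
  simpa using h

lemma cn_mean {Ω : Type*} [MeasurableSpace Ω] {μ : Measure Ω} [IsProbabilityMeasure μ]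
    {X Y : Ω → ℝ} {v : NNReal}
    (hX : Measurable X) (hY : Measurable Y)
    (lX : μ.map X = gaussianReal 0 v) (lY : μ.map Y = gaussianReal 0 v) :
    ∫ ω, Complex.mk (X ω) (Y ω) ∂μ = 0 := by
  have hi := (cn_memLp hX hY lX lY).integrable (by norm_num)
  have := integral_re_add_im (𝕜 := ℂ) hi
  rw [← this]
  simp [g_mean hX lX, g_mean hY lY]

lemma cn_sq {Ω : Type*} [MeasurableSpace Ω] {μ : Measure Ω} [IsProbabilityMeasure μ]
    {X Y : Ω → ℝ} {v : NNReal}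
    (hX : Measurable X) (hY : Measurable Y)
    (lX : μ.map X = gaussianReal 0 v) (lY : μ.map Y = gaussianReal 0 v) :
    ∫ ω, Complex.mk (X ω) (Y ω) * star (Complex.mk (X ω) (Y ω)) ∂μ = ((2 * v : ℝ) : ℂ) := by
  have hi := cn_memLp hX hY lX lY
  have e : ∀ ω, Complex.mk (X ω) (Y ω) * star (Complex.mk (X ω) (Y ω))
      = ((X ω ^ 2 + Y ω ^ 2 : ℝ) : ℂ) := by
    intro ω
    rw [Complex.star_def, Complex.mul_conj, Complex.normSq_mk]; push_cast; ring
  simp_rw [e]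
  rw [integral_complex_ofReal, integral_add, g_sq hX lX, g_sq hY lY]
  · push_cast; ring
  · exact (memLp_re_im_iff.2 hi).1.integrable_sq
  · exact (memLp_re_im_iff.2 hi).2.integrable_sq

lemma memLp_mul_indep {Ω : Type*} [MeasurableSpace Ω] {μ : Measure Ω}
    {U V : Ω → ℂ} (hU : MemLp U 2 μ) (hV : MemLp V 2 μ) (h : IndepFun U V μ) :
    MemLp (fun ω => U ω * V ω) 2 μ := by
  refine (memLp_two_iff_integrable_sq_norm (hU.1.mul hV.1)).2 ?_
  have := (h.comp (φ := fun z : ℂ => ‖z‖ ^ 2) (ψ := fun z : ℂ => ‖z‖ ^ 2) (by fun_prop)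
    (by fun_prop)).integrable_mul ((memLp_two_iff_integrable_sq_norm hU.1).1 hU)
    ((memLp_two_iff_integrable_sq_norm hV.1).1 hV)
  refine this.congr (ae_of_all _ fun ω => ?_)
  simp [mul_pow]

lemma phase_char {Ω : Type*} [MeasurableSpace Ω] {μ : Measure Ω} [IsProbabilityMeasure μ]
    {X : ℕ → Ω → ℝ} {v : NNReal} (hX : ∀ u, Measurable (X u)) (h : iIndepFun X μ)
    (l : ∀ u, μ.map (X u) = gaussianReal 0 v) (s : Finset ℕ) (a : ℝ) (ha : a ^ 2 = 1) :
    ∫ ω, Complex.exp (a * (∑ u ∈ s, X u ω : ℝ) * Complex.I) ∂μ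
      = (Real.exp (-(v / 2) * s.card) : ℂ) := by
  have h1 := iIndepFun.charFun_map_fun_finsetSum_eq_prod (P := μ) (s := s) (X := X)
    (fun i _ => (hX i).aemeasurable) (h.restrict s)
  have h2 := congrFun h1 a
  rw [charFun_apply_real, integral_map (by fun_prop) (by fun_prop)] at h2
  rw [h2, Finset.prod_apply]
  simp_rw [l, charFun_gaussianReal]
  rw [Finset.prod_const, ← Complex.exp_nat_mul]
  push_cast
  congr 1
  have : (a : ℂ) ^ 2 = 1 := by exact_mod_cast ha
  rw [this]; simp; ring

lemma meas_mk {Ω : Type*} [MeasurableSpace Ω] {X Y : Ω → ℝ} (hX : Measurable X)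
    (hY : Measurable Y) : Measurable (fun ω => Complex.mk (X ω) (Y ω)) :=
  Complex.measurableEquivRealProd.symm.measurable.comp (hX.prodMk hY)

lemma int_mul_star {Ω : Type*} [MeasurableSpace Ω] {μ : Measure Ω} {U V : Ω → ℂ}
    (hU : MemLp U 2 μ) (hV : MemLp V 2 μ) : Integrable (fun ω => U ω * star (V ω)) μ :=
  MemLp.integrable_mul (p := 2) (q := 2) hU hV.star

lemma int_mul_star_comm {Ω : Type*} [MeasurableSpace Ω] {μ : Measure Ω} (U V : Ω → ℂ) :
    ∫ ω, U ω * star (V ω) ∂μ = star (∫ ω, V ω * star (U ω) ∂μ) := by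
  rw [Complex.star_def, ← integral_conj]
  congr 1; ext ω; simp [mul_comm]

lemma int_star {Ω : Type*} [MeasurableSpace Ω] {μ : Measure Ω} (U : Ω → ℂ) :
    ∫ ω, star (U ω) ∂μ = star (∫ ω, U ω ∂μ) := by
  rw [Complex.star_def, ← integral_conj]

lemma add_orth {Ω : Type*} [MeasurableSpace Ω] {μ : Measure Ω} {U V U' V' : Ω → ℂ}
    (hU : MemLp U 2 μ) (hV : MemLp V 2 μ) (hU' : MemLp U' 2 μ) (hV' : MemLp V' 2 μ)
    (h : ∫ ω, U ω * star (V' ω) ∂μ = 0) (h' : ∫ ω, U' ω * star (V ω) ∂μ = 0) :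
    ∫ ω, (U ω + V ω) * star (U' ω + V' ω) ∂μ
      = ∫ ω, U ω * star (U' ω) ∂μ + ∫ ω, V ω * star (V' ω) ∂μ := by
  have e : ∀ ω, (U ω + V ω) * star (U' ω + V' ω)
      = (U ω * star (U' ω) + V ω * star (V' ω)) + (U ω * star (V' ω) + V ω * star (U' ω)) := by
    intro ω; rw [star_add]; ring
  simp_rw [e]
  have s1 : Integrable (fun ω => U ω * star (U' ω) + V ω * star (V' ω)) μ :=
    (int_mul_star hU hU').add (int_mul_star hV hV')
  have s2 : Integrable (fun ω => U ω * star (V' ω) + V ω * star (U' ω)) μ :=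
    (int_mul_star hU hV').add (int_mul_star hV hU')
  rw [integral_add s1 s2,
    integral_add (int_mul_star hU hU') (int_mul_star hV hV'),
    integral_add (int_mul_star hU hV') (int_mul_star hV hU'), h, int_mul_star_comm V U', h']
  simp

lemma sum_gram {Ω ι : Type*} [Fintype ι] [MeasurableSpace Ω] {μ : Measure Ω}
    {g : ι → Ω → ℂ} (hg : ∀ p, MemLp (g p) 2 μ) (a c : ι → ℂ) :
    ∫ ω, (∑ p, a p * g p ω) * star (∑ p, c p * g p ω) ∂μ
      = ∑ p, ∑ q, a p * star (c q) * ∫ ω, g p ω * star (g q ω) ∂μ := by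
  have e : ∀ ω, (∑ p, a p * g p ω) * star (∑ p, c p * g p ω)
      = ∑ p, ∑ q, a p * star (c q) * (g p ω * star (g q ω)) := by
    intro ω
    rw [star_sum, Finset.sum_mul_sum]
    refine Finset.sum_congr rfl fun p _ => Finset.sum_congr rfl fun q _ => ?_
    rw [star_mul']; ring
  simp_rw [e]
  have hi : ∀ p q, Integrable (fun ω => a p * star (c q) * (g p ω * star (g q ω))) μ :=
    fun p q => (int_mul_star (hg p) (hg q)).const_mul _
  rw [integral_finsetSum _ fun p _ => integrable_finsetSum _ fun q _ => hi p q]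
  refine Finset.sum_congr rfl fun p _ => ?_
  rw [integral_finsetSum _ fun q _ => hi p q]
  refine Finset.sum_congr rfl fun q _ => ?_
  rw [integral_const_mul]

end helpers

section model

set_option linter.unusedSectionVars false

variable {Ω : Type*} [MeasureSpace Ω] [IsProbabilityMeasure (ℙ : Measure Ω)]
  {N B L K : ℕ} {lam : Fin L → Fin K → ℝ}
  {σ2 ξ κ δ : ℝ} {x : Fin L → Fin K → Fin B → ℂ}

/-- Index type of the sources. -/
abbrev Idx (N L K : ℕ) := (Fin L × Fin K × Fin N × Bool) ⊕ (Fin N × ℕ) ⊕ (Fin N × ℕ × Bool) ⊕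
        (Fin N × ℕ × Bool)

/-- The family of sources. -/
noncomputable def F (M : MIMOModel Ω N B L K lam σ2 ξ κ δ x) : Idx N L K → Ω → ℝ := fun i =>
      match i with
      | Sum.inl (l, k, n, false) => M.hRe l k n
      | Sum.inl (l, k, n, true) => M.hIm l k n
      | Sum.inr (Sum.inl (n, u)) => M.dphi n u
      | Sum.inr (Sum.inr (Sum.inl (n, s, false))) => M.zRe n s
      | Sum.inr (Sum.inr (Sum.inl (n, s, true))) => M.zIm n s
      | Sum.inr (Sum.inr (Sum.inr (n, s, false))) => M.etaRe n s
      | Sum.inr (Sum.inr (Sum.inr (n, s, true))) => M.etaIm n s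

variable (M : MIMOModel Ω N B L K lam σ2 ξ κ δ x)

lemma F_meas (i) : Measurable (M.F i) := by
  rcases i with ⟨l, k, n, _ | _⟩ | ⟨n, u⟩ | ⟨n, s, _ | _⟩ | ⟨n, s, _ | _⟩
  · exact M.meas_hRe l k n
  · exact M.meas_hIm l k n
  · exact M.meas_dphi n u
  · exact M.meas_zRe n s
  · exact M.meas_zIm n s
  · exact M.meas_etaRe n s
  · exact M.meas_etaIm n s

lemma F_indep : iIndepFun M.F (ℙ : Measure Ω) := by
  have h := M.indep
  convert h using 1
  funext i
  rcases i with ⟨l, k, n, _ | _⟩ | ⟨n, u⟩ | ⟨n, s, _ | _⟩ | ⟨n, s, _ | _⟩ <;> rfl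

lemma ind (S T : Set (Idx N L K)) (hST : ∀ i ∈ S, i ∉ T)
    {U V : Ω → ℂ} (hU : Measurable[sig M.F S] U) (hV : Measurable[sig M.F T] V) :
    IndepFun U V (ℙ : Measure Ω) :=
  sig_indep M.F_meas M.F_indep S T (Set.disjoint_left.2 fun i h h' => hST i h h') hU hV

lemma ch_sig {S : Set (Idx N L K)} {l k n} (h : ∀ c, Sum.inl (l, k, n, c) ∈ S) :
    Measurable[sig M.F S] (M.ch l k n) :=
  @meas_mk Ω (sig M.F S) _ _ (sig_meas M.F (h false)) (sig_meas M.F (h true))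

lemma z_sig {S : Set (Idx N L K)} {n s} (h : ∀ c, Sum.inr (Sum.inr (Sum.inl (n, s, c))) ∈ S) :
    Measurable[sig M.F S] (M.z n s) :=
  @meas_mk Ω (sig M.F S) _ _ (sig_meas M.F (h false)) (sig_meas M.F (h true))

lemma eta_sig {S : Set (Idx N L K)} {n s} (h : ∀ c, Sum.inr (Sum.inr (Sum.inr (n, s, c))) ∈ S) :
    Measurable[sig M.F S] (M.eta n s) :=
  @meas_mk Ω (sig M.F S) _ _ (sig_meas M.F (h false)) (sig_meas M.F (h true))

/-- phase factor -/
noncomputable def P (n : Fin N) (b : Fin B) (ω : Ω) : ℂ :=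
  Complex.exp (Complex.I * ((M.phase n ((b : ℕ) + 1) ω : ℝ) : ℂ))

/-- signal -/
noncomputable def A (n : Fin N) (b : Fin B) (ω : Ω) : ℂ :=
  ∑ l, ∑ m, M.ch l m n ω * x l m b

/-- distortion amplitude -/
noncomputable def R (n : Fin N) (b : Fin B) (ω : Ω) : ℂ :=
  (κ : ℂ) * ((Real.sqrt (∑ l, ∑ m, Complex.normSq (x l m b)
        * Complex.normSq (M.ch l m n ω)) : ℝ) : ℂ)

lemma y_eq (n : Fin N) (b : Fin B) (ω : Ω) : M.y n b ω =
    (M.P n b ω * M.A n b ω + M.R n b ω * M.z n (b + 1) ω) + M.eta n (b + 1) ω := rfl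

lemma P_sig {S : Set (Idx N L K)} {n} (h : ∀ u, Sum.inr (Sum.inl (n, u)) ∈ S) (b : Fin B) :
    Measurable[sig M.F S] (M.P n b) := by
  have h1 : Measurable[sig M.F S] (M.phase n (b + 1)) := by
    have := @Finset.measurable_sum ℝ ℕ Ω _ _ _ (sig M.F S) (fun u => M.dphi n u)
      (Finset.Icc 1 ((b : ℕ) + 1)) (fun u _ => sig_meas M.F (h u))
    convert this using 1
    ext ω
    simp [phase]
  have h2 : Measurable fun r : ℝ => Complex.exp (Complex.I * (r : ℂ)) := by fun_prop
  exact h2.comp h1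

lemma A_sig_aux {Ω : Type*} [MeasurableSpace Ω] (c : Fin L → Fin K → Ω → ℂ)
    (hc : ∀ l k, Measurable (c l k)) (b : Fin B) :
    Measurable (fun ω => ∑ l, ∑ m, c l m ω * x l m b) := by fun_prop

lemma R_sig_aux {Ω : Type*} [MeasurableSpace Ω] (c : Fin L → Fin K → Ω → ℂ)
    (hc : ∀ l k, Measurable (c l k)) (b : Fin B) :
    Measurable (fun ω => (κ : ℂ) * ((Real.sqrt (∑ l, ∑ m, Complex.normSq (x l m b)
        * Complex.normSq (c l m ω)) : ℝ) : ℂ)) := by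
  have : Measurable Complex.normSq := Complex.continuous_normSq.measurable
  fun_prop

lemma A_sig {S : Set (Idx N L K)} {n} (h : ∀ l k c, Sum.inl (l, k, n, c) ∈ S) (b : Fin B) :
    Measurable[sig M.F S] (M.A n b) :=
  @A_sig_aux B L K x Ω (sig M.F S) _ (fun l k => M.ch_sig (h l k)) b

lemma R_sig {S : Set (Idx N L K)} {n} (h : ∀ l k c, Sum.inl (l, k, n, c) ∈ S) (b : Fin B) :
    Measurable[sig M.F S] (M.R n b) :=
  @R_sig_aux B L K κ x Ω (sig M.F S) _ (fun l k => M.ch_sig (h l k)) b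

lemma sig_mul {Ω : Type*} (m : MeasurableSpace Ω) {U V : Ω → ℂ} (hU : Measurable[m] U)
    (hV : Measurable[m] V) : Measurable[m] (fun ω => U ω * V ω) := hU.mul hV

lemma sig_star {Ω : Type*} (m : MeasurableSpace Ω) {U : Ω → ℂ} (hU : Measurable[m] U) :
    Measurable[m] (fun ω => star (U ω)) := by
  have : Measurable (fun z : ℂ => star z) := continuous_star.measurable
  exact this.comp hU

/-- sets of indices -/
def SH (n : Fin N) : Set (Idx N L K) := {i | ∃ l k c, i = Sum.inl (l, k, n, c)}
/-- sets of indices -/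
def SP (n : Fin N) : Set (Idx N L K) := {i | ∃ u, i = Sum.inr (Sum.inl (n, u))}
/-- sets of indices -/
def SZ (n : Fin N) : Set (Idx N L K) := {i | ∃ s c, i = Sum.inr (Sum.inr (Sum.inl (n, s, c)))}
/-- sets of indices -/
def SE (n : Fin N) : Set (Idx N L K) := {i | ∃ s c, i = Sum.inr (Sum.inr (Sum.inr (n, s, c)))}

lemma ch_memLp (l k n) : MemLp (M.ch l k n) 2 (ℙ : Measure Ω) :=
  cn_memLp (M.meas_hRe l k n) (M.meas_hIm l k n) (M.law_hRe l k n) (M.law_hIm l k n)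
lemma z_memLp (n s) : MemLp (M.z n s) 2 (ℙ : Measure Ω) :=
  cn_memLp (M.meas_zRe n s) (M.meas_zIm n s) (M.law_zRe n s) (M.law_zIm n s)
lemma eta_memLp (n s) : MemLp (M.eta n s) 2 (ℙ : Measure Ω) :=
  cn_memLp (M.meas_etaRe n s) (M.meas_etaIm n s) (M.law_etaRe n s) (M.law_etaIm n s)

lemma ch_mean (l k n) : ∫ ω, M.ch l k n ω = 0 :=
  cn_mean (M.meas_hRe l k n) (M.meas_hIm l k n) (M.law_hRe l k n) (M.law_hIm l k n)
lemma z_mean (n s) : ∫ ω, M.z n s ω = 0 :=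
  cn_mean (M.meas_zRe n s) (M.meas_zIm n s) (M.law_zRe n s) (M.law_zIm n s)
lemma eta_mean (n s) : ∫ ω, M.eta n s ω = 0 :=
  cn_mean (M.meas_etaRe n s) (M.meas_etaIm n s) (M.law_etaRe n s) (M.law_etaIm n s)

lemma int_indep {Ω : Type*} [MeasurableSpace Ω] {μ : Measure Ω} {U V : Ω → ℂ} (h : IndepFun U V μ)
    (hU : AEStronglyMeasurable U μ) (hV : AEStronglyMeasurable V μ) :
    ∫ ω, U ω * V ω ∂μ = (∫ ω, U ω ∂μ) * ∫ ω, V ω ∂μ :=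
  h.integral_fun_mul_eq_mul_integral hU hV

lemma star_indep {Ω : Type*} [MeasurableSpace Ω] {μ : Measure Ω} {U V : Ω → ℂ}
    (h : IndepFun U V μ) : IndepFun U (fun ω => star (V ω)) μ :=
  h.comp (φ := fun z => z) (ψ := fun z : ℂ => star z) (by fun_prop) continuous_star.measurable

lemma int_zero {Ω : Type*} [MeasurableSpace Ω] {μ : Measure Ω} {U V : Ω → ℂ} (h : IndepFun U V μ)
    (hU : AEStronglyMeasurable U μ) (hV : AEStronglyMeasurable V μ) (h0 : ∫ ω, V ω ∂μ = 0) :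
    ∫ ω, U ω * star (V ω) ∂μ = 0 := by
  rw [int_indep (star_indep h) hU (by exact hV.star), int_star, h0]; simp

lemma ch_cov (hlam : ∀ l k, 0 < lam l k) (n) (p q : Fin L × Fin K) :
    ∫ ω, M.ch p.1 p.2 n ω * star (M.ch q.1 q.2 n ω) = if p = q then (lam p.1 p.2 : ℂ) else 0 := by
  split_ifs with h
  · subst h
    have := cn_sq (M.meas_hRe p.1 p.2 n) (M.meas_hIm p.1 p.2 n) (M.law_hRe p.1 p.2 n)
      (M.law_hIm p.1 p.2 n)
    refine this.trans ?_
    rw [Real.coe_toNNReal _ (by linarith [hlam p.1 p.2])]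
    congr 1; ring
  · refine int_zero (M.ind {i | ∃ c, i = Sum.inl (p.1, p.2, n, c)}
      {i | ∃ c, i = Sum.inl (q.1, q.2, n, c)} ?_ (M.ch_sig fun c => ⟨c, rfl⟩)
      (M.ch_sig fun c => ⟨c, rfl⟩)) (M.ch_memLp _ _ _).1 (M.ch_memLp _ _ _).1 (M.ch_mean _ _ _)
    rintro i ⟨c, rfl⟩ ⟨c', h'⟩
    apply h
    simp only [Sum.inl.injEq, Prod.mk.injEq] at h'
    exact Prod.ext h'.1 h'.2.1

lemma z_cov (n s s') :
    ∫ ω, M.z n s ω * star (M.z n s' ω) = if s = s' then 1 else 0 := by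
  split_ifs with h
  · subst h
    have := cn_sq (M.meas_zRe n s) (M.meas_zIm n s) (M.law_zRe n s) (M.law_zIm n s)
    refine this.trans ?_
    rw [Real.coe_toNNReal _ (by norm_num)]
    norm_num
  · refine int_zero (M.ind {i | ∃ c, i = Sum.inr (Sum.inr (Sum.inl (n, s, c)))}
      {i | ∃ c, i = Sum.inr (Sum.inr (Sum.inl (n, s', c)))} ?_ (M.z_sig fun c => ⟨c, rfl⟩)
      (M.z_sig fun c => ⟨c, rfl⟩)) (M.z_memLp _ _).1 (M.z_memLp _ _).1 (M.z_mean _ _)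
    rintro i ⟨c, rfl⟩ ⟨c', h'⟩
    simp at h'
    exact h h'.1

lemma eta_cov (hv : 0 ≤ σ2 * ξ) (n s s') :
    ∫ ω, M.eta n s ω * star (M.eta n s' ω) = if s = s' then ((σ2 * ξ : ℝ) : ℂ) else 0 := by
  split_ifs with h
  · subst h
    have := cn_sq (M.meas_etaRe n s) (M.meas_etaIm n s) (M.law_etaRe n s) (M.law_etaIm n s)
    refine this.trans ?_
    rw [Real.coe_toNNReal _ (by linarith)]
    congr 1; ring
  · refine int_zero (M.ind {i | ∃ c, i = Sum.inr (Sum.inr (Sum.inr (n, s, c)))}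
      {i | ∃ c, i = Sum.inr (Sum.inr (Sum.inr (n, s', c)))} ?_ (M.eta_sig fun c => ⟨c, rfl⟩)
      (M.eta_sig fun c => ⟨c, rfl⟩)) (M.eta_memLp _ _).1 (M.eta_memLp _ _).1 (M.eta_mean _ _)
    rintro i ⟨c, rfl⟩ ⟨c', h'⟩
    simp at h'
    exact h h'.1

lemma A_eq (n b) : M.A n b = fun ω => ∑ p : Fin L × Fin K, x p.1 p.2 b * M.ch p.1 p.2 n ω := by
  ext ω
  rw [A, Fintype.sum_prod_type]
  simp_rw [mul_comm]

lemma A_memLp (n b) : MemLp (M.A n b) 2 (ℙ : Measure Ω) := by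
  rw [A_eq]
  exact memLp_finsetSum _ fun p _ => (M.ch_memLp _ _ _).const_mul _

lemma A_cov (hlam : ∀ l k, 0 < lam l k) (n b b') :
    ∫ ω, M.A n b ω * star (M.A n b' ω)
      = ∑ l, ∑ m, (lam l m : ℂ) * (x l m b * star (x l m b')) := by
  rw [A_eq, A_eq, sum_gram (g := fun p : Fin L × Fin K => M.ch p.1 p.2 n)
    (fun p => M.ch_memLp _ _ _) (fun p => x p.1 p.2 b) (fun p => x p.1 p.2 b'),
    ← Fintype.sum_prod_type' (f := fun l m => (lam l m : ℂ) * (x l m b * star (x l m b')))]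
  refine Finset.sum_congr rfl fun p _ => ?_
  simp_rw [M.ch_cov hlam]
  simp [mul_comm]

lemma normSq_int {U : Ω → ℂ} (hU : MemLp U 2 (ℙ : Measure Ω)) :
    Integrable (fun ω => Complex.normSq (U ω)) (ℙ : Measure Ω) := by
  simp_rw [Complex.normSq_eq_norm_sq]
  exact (memLp_two_iff_integrable_sq_norm hU.1).1 hU

lemma R_normSq (n b ω) : Complex.normSq (M.R n b ω)
    = κ ^ 2 * ∑ l, ∑ m, Complex.normSq (x l m b) * Complex.normSq (M.ch l m n ω) := by
  rw [R, map_mul, Complex.normSq_ofReal, Complex.normSq_ofReal, Real.mul_self_sqrt, sq]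
  exact Finset.sum_nonneg fun l _ => Finset.sum_nonneg fun m _ =>
    mul_nonneg (Complex.normSq_nonneg _) (Complex.normSq_nonneg _)

lemma sig_le {S : Set (Idx N L K)} : sig M.F S ≤ (inferInstance : MeasurableSpace Ω) :=
  iSup₂_le fun i _ => (M.F_meas i).comap_le

lemma R_meas (n b) : Measurable (M.R n b) :=
  (M.R_sig (S := Set.univ) (fun _ _ _ => trivial) b).mono M.sig_le le_rfl

lemma P_meas (n b) : Measurable (M.P n b) :=
  (M.P_sig (S := Set.univ) (fun _ => trivial) b).mono M.sig_le le_rfl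

lemma R_memLp (n b) : MemLp (M.R n b) 2 (ℙ : Measure Ω) := by
  rw [memLp_two_iff_integrable_sq_norm (M.R_meas n b).aestronglyMeasurable]
  simp_rw [← Complex.normSq_eq_norm_sq, R_normSq]
  exact (integrable_finsetSum _ fun l _ => integrable_finsetSum _ fun m _ =>
    (normSq_int (M.ch_memLp l m n)).const_mul _).const_mul _

lemma R_cov (hlam : ∀ l k, 0 < lam l k) (n b) :
    ∫ ω, M.R n b ω * star (M.R n b ω)
      = (κ : ℂ) ^ 2 * ∑ l, ∑ m, (lam l m : ℂ) * (x l m b * star (x l m b)) := by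
  have e : ∀ ω, M.R n b ω * star (M.R n b ω) = ((Complex.normSq (M.R n b ω) : ℝ) : ℂ) := by
    intro ω; rw [Complex.star_def, Complex.mul_conj]
  simp_rw [e, R_normSq]
  rw [integral_complex_ofReal, integral_const_mul, integral_finsetSum _
    fun l _ => integrable_finsetSum _ fun m _ => (normSq_int (M.ch_memLp l m n)).const_mul _]
  push_cast
  congr 1
  refine Finset.sum_congr rfl fun l _ => ?_
  rw [integral_finsetSum _ fun m _ => (normSq_int (M.ch_memLp l m n)).const_mul _]
  push_cast
  refine Finset.sum_congr rfl fun m _ => ?_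
  rw [integral_const_mul]
  have h1 := M.ch_cov hlam n (l, m) (l, m)
  have e : ∀ ω, M.ch l m n ω * star (M.ch l m n ω) = ((Complex.normSq (M.ch l m n ω) : ℝ) : ℂ) := by
    intro ω; rw [Complex.star_def, Complex.mul_conj]
  simp_rw [e] at h1
  rw [integral_complex_ofReal] at h1
  push_cast
  rw [h1, Complex.star_def, Complex.mul_conj]
  simp [mul_comm]

lemma P_norm (n b ω) : ‖M.P n b ω‖ = 1 := by
  rw [P, mul_comm, Complex.norm_exp_ofReal_mul_I]

lemma P_memLp (n b) : MemLp (M.P n b) 2 (ℙ : Measure Ω) :=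
  MemLp.of_bound (M.P_meas n b).aestronglyMeasurable 1 (ae_of_all _ fun ω => (M.P_norm n b ω).le)

lemma P_cov_le (hδ : 0 ≤ δ) (n) (b b' : Fin B) (hb : b' ≤ b) :
    ∫ ω, M.P n b ω * star (M.P n b' ω)
      = (Real.exp (-(δ / 2) * |((b : ℕ) : ℝ) - ((b' : ℕ) : ℝ)|) : ℂ) := by
  have hI : iIndepFun (fun u => M.dphi n u) (ℙ : Measure Ω) :=
    M.F_indep.precomp (g := fun u : ℕ => (Sum.inr (Sum.inl (n, u)) : Idx N L K))
      (fun u v h => by simpa using h)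
  have hb' : (b' : ℕ) ≤ b := hb
  have h := phase_char (fun u => M.meas_dphi n u) hI (M.law_dphi n)
    (Finset.Ioc ((b' : ℕ) + 1) (b + 1)) 1 (by norm_num)
  have e : ∀ ω, M.P n b ω * star (M.P n b' ω) = Complex.exp ((1 : ℝ) *
      (∑ u ∈ Finset.Ioc ((b' : ℕ) + 1) (b + 1), M.dphi n u ω : ℝ) * Complex.I) := by
    intro ω
    have hs : M.phase n (b + 1) ω = M.phase n (b' + 1) ω
        + ∑ u ∈ Finset.Ioc ((b' : ℕ) + 1) (b + 1), M.dphi n u ω := by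
      rw [phase, phase, ← Finset.sum_union]
      · congr 1
        ext u; simp only [Finset.mem_union, Finset.mem_Icc, Finset.mem_Ioc]; omega
      · rw [Finset.disjoint_left]
        intro u; simp only [Finset.mem_Icc, Finset.mem_Ioc]; omega
    rw [P, P, Complex.star_def, ← Complex.exp_conj, ← Complex.exp_add, hs]
    congr 1
    simp only [map_mul, Complex.conj_I, Complex.conj_ofReal]
    push_cast; ring
  simp_rw [e]
  rw [h, Real.coe_toNNReal _ hδ, Nat.card_Ioc, abs_of_nonneg (by simpa using hb')]
  congr 3
  rw [Nat.add_sub_add_right, Nat.cast_sub hb']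

lemma P_cov (hδ : 0 ≤ δ) (n) (b b' : Fin B) :
    ∫ ω, M.P n b ω * star (M.P n b' ω)
      = (Real.exp (-(δ / 2) * |((b : ℕ) : ℝ) - ((b' : ℕ) : ℝ)|) : ℂ) := by
  rcases le_total b' b with h | h
  · exact M.P_cov_le hδ n b b' h
  · rw [int_mul_star_comm, M.P_cov_le hδ n b' b h, Complex.star_def, Complex.conj_ofReal, abs_sub_comm]

lemma SP_SH (n : Fin N) : ∀ i ∈ (SP n : Set (Idx N L K)), i ∉ (SH n : Set (Idx N L K)) := by
  rintro i ⟨_, rfl⟩ ⟨_, _, _, h⟩; simp at h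
lemma SHP_SZ (n : Fin N) :
    ∀ i ∈ (SH n ∪ SP n : Set (Idx N L K)), i ∉ (SZ n : Set (Idx N L K)) := by
  rintro i (⟨_, _, _, rfl⟩ | ⟨_, rfl⟩) ⟨_, _, h⟩ <;> simp at h
lemma SHPZ_SE (n : Fin N) :
    ∀ i ∈ (SH n ∪ SP n ∪ SZ n : Set (Idx N L K)), i ∉ (SE n : Set (Idx N L K)) := by
  rintro i ((⟨_, _, _, rfl⟩ | ⟨_, rfl⟩) | ⟨_, _, rfl⟩) ⟨_, _, h⟩ <;> simp at h

lemma PA_memLp (n b) : MemLp (fun ω => M.P n b ω * M.A n b ω) 2 (ℙ : Measure Ω) :=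
  memLp_mul_indep (M.P_memLp n b) (M.A_memLp n b) (M.ind (SP n) (SH n) (SP_SH n)
    (M.P_sig (S := SP n) (fun u => ⟨u, rfl⟩) b) (M.A_sig (S := SH n) (fun l k c => ⟨l, k, c, rfl⟩) b))

lemma RZ_memLp (n b) (s : ℕ) : MemLp (fun ω => M.R n b ω * M.z n s ω) 2 (ℙ : Measure Ω) :=
  memLp_mul_indep (M.R_memLp n b) (M.z_memLp n s) (M.ind (SH n ∪ SP n) (SZ n) (SHP_SZ n)
    (M.R_sig (fun l k c => Or.inl ⟨l, k, c, rfl⟩) b) (M.z_sig (fun c => ⟨s, c, rfl⟩)))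

lemma PA_cov (hlam : ∀ l k, 0 < lam l k) (hδ : 0 ≤ δ) (n b b') :
    ∫ ω, (M.P n b ω * M.A n b ω) * star (M.P n b' ω * M.A n b' ω)
      = (Real.exp (-(δ / 2) * |((b : ℕ) : ℝ) - ((b' : ℕ) : ℝ)|) : ℂ)
        * ∑ l, ∑ m, (lam l m : ℂ) * (x l m b * star (x l m b')) := by
  rw [← M.P_cov hδ n b b', ← M.A_cov hlam n b b', ← int_indep]
  · congr 1; ext ω; rw [star_mul']; ring
  · exact M.ind (SP n) (SH n) (SP_SH n)
      (sig_mul (sig M.F _) (M.P_sig (S := SP n) (fun u => ⟨u, rfl⟩) b) (sig_star (sig M.F _) (M.P_sig (S := SP n) (fun u => ⟨u, rfl⟩) b')))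
      (sig_mul (sig M.F _) (M.A_sig (S := SH n) (fun l k c => ⟨l, k, c, rfl⟩) b)
        (sig_star (sig M.F _) (M.A_sig (S := SH n) (fun l k c => ⟨l, k, c, rfl⟩) b')))
  · exact (int_mul_star (M.P_memLp n b) (M.P_memLp n b')).1
  · exact (int_mul_star (M.A_memLp n b) (M.A_memLp n b')).1

lemma RZ_cov (hlam : ∀ l k, 0 < lam l k) (n b b') :
    ∫ ω, (M.R n b ω * M.z n (b + 1) ω) * star (M.R n b' ω * M.z n (b' + 1) ω)
      = if b = b' then (κ : ℂ) ^ 2 * ∑ l, ∑ m, (lam l m : ℂ) * (x l m b * star (x l m b))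
        else 0 := by
  have h : ∫ ω, (M.R n b ω * M.z n (b + 1) ω) * star (M.R n b' ω * M.z n (b' + 1) ω)
      = (∫ ω, M.R n b ω * star (M.R n b' ω)) *
        ∫ ω, M.z n (b + 1) ω * star (M.z n (b' + 1) ω) := by
    rw [← int_indep]
    · congr 1; ext ω; rw [star_mul']; ring
    · exact M.ind (SH n ∪ SP n) (SZ n) (SHP_SZ n)
        (sig_mul (sig M.F _) (M.R_sig (fun l k c => Or.inl ⟨l, k, c, rfl⟩) b)
          (sig_star (sig M.F _) (M.R_sig (fun l k c => Or.inl ⟨l, k, c, rfl⟩) b')))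
        (sig_mul (sig M.F _) (M.z_sig (fun c => ⟨_, c, rfl⟩)) (sig_star (sig M.F _) (M.z_sig (fun c => ⟨_, c, rfl⟩))))
    · exact (int_mul_star (M.R_memLp n b) (M.R_memLp n b')).1
    · exact (int_mul_star (M.z_memLp n _) (M.z_memLp n _)).1
  rw [h, z_cov]
  by_cases hb : b = b'
  · subst hb
    rw [if_pos rfl, if_pos rfl, M.R_cov hlam n b, mul_one]
  · have : ¬ ((b : ℕ) + 1 = b' + 1) := fun h => hb (Fin.ext (by omega))
    rw [if_neg hb, if_neg this, mul_zero]

lemma PA_RZ (n b b') :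
    ∫ ω, (M.P n b ω * M.A n b ω) * star (M.R n b' ω * M.z n (b' + 1) ω) = 0 := by
  have h := int_zero (μ := (ℙ : Measure Ω)) (U := fun ω => (M.P n b ω * M.A n b ω) * star (M.R n b' ω))
    (V := M.z n (b' + 1)) (M.ind (SH n ∪ SP n) (SZ n) (SHP_SZ n)
      (sig_mul (sig M.F _) (sig_mul (sig M.F _) (M.P_sig (fun u => Or.inr ⟨u, rfl⟩) b)
        (M.A_sig (fun l k c => Or.inl ⟨l, k, c, rfl⟩) b))
          (sig_star (sig M.F _) (M.R_sig (fun l k c => Or.inl ⟨l, k, c, rfl⟩) b')))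
      (M.z_sig (fun c => ⟨_, c, rfl⟩)))
    (int_mul_star (M.PA_memLp n b) (M.R_memLp n b')).1 (M.z_memLp n _).1 (M.z_mean n _)
  rw [← h]
  congr 1; ext ω; rw [star_mul']; ring

lemma Q_memLp (n) (b : Fin B) :
    MemLp (fun ω => M.P n b ω * M.A n b ω + M.R n b ω * M.z n (b + 1) ω) 2 (ℙ : Measure Ω) :=
  (M.PA_memLp n b).add (M.RZ_memLp n b _)

lemma Q_eta (n) (b : Fin B) (s : ℕ) :
    ∫ ω, (M.P n b ω * M.A n b ω + M.R n b ω * M.z n (b + 1) ω) * star (M.eta n s ω) = 0 := by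
  refine int_zero (M.ind (SH n ∪ SP n ∪ SZ n) (SE n) (SHPZ_SE n) ?_ (M.eta_sig (fun c => ⟨_, c, rfl⟩)))
    (M.Q_memLp n b).1 (M.eta_memLp n _).1 (M.eta_mean n _)
  exact (sig_mul (sig M.F _) (M.P_sig (fun u => Or.inl (Or.inr ⟨u, rfl⟩)) b)
        (M.A_sig (fun l k c => Or.inl (Or.inl ⟨l, k, c, rfl⟩)) b)).add
     (sig_mul (sig M.F _) (M.R_sig (fun l k c => Or.inl (Or.inl ⟨l, k, c, rfl⟩)) b)
        (M.z_sig (fun c => Or.inr ⟨_, c, rfl⟩)))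

lemma y_memLp (n b) : MemLp (M.y n b) 2 (ℙ : Measure Ω) :=
  (M.Q_memLp n b).add (M.eta_memLp n _)

lemma y_cov (hlam : ∀ l k, 0 < lam l k) (hδ : 0 ≤ δ) (hv : 0 ≤ σ2 * ξ) (n) (b b' : Fin B) :
    ∫ ω, M.y n b ω * star (M.y n b' ω) = PsiMat lam σ2 ξ κ δ x b b' := by
  simp_rw [y_eq]
  rw [add_orth (M.Q_memLp n b) (M.eta_memLp n _) (M.Q_memLp n b') (M.eta_memLp n _)
    (M.Q_eta n b _) (M.Q_eta n b' _),
    add_orth (M.PA_memLp n b) (M.RZ_memLp n b _) (M.PA_memLp n b') (M.RZ_memLp n b' _)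
    (M.PA_RZ n b b') (M.PA_RZ n b' b), M.PA_cov hlam hδ, M.RZ_cov hlam, M.eta_cov hv]
  simp only [PsiMat, Matrix.add_apply, Matrix.sum_apply, Matrix.smul_apply, Xmat, Matrix.of_apply,
    smul_eq_mul]
  by_cases hb : b = b'
  · subst hb
    simp only [if_true, sub_self, abs_zero, mul_zero, Real.exp_zero, Complex.ofReal_one, one_mul,
      Matrix.one_apply_eq, mul_one]
    congr 1
    rw [Finset.mul_sum, ← Finset.sum_add_distrib]
    refine Finset.sum_congr rfl fun l _ => ?_
    rw [Finset.mul_sum, ← Finset.sum_add_distrib]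
    refine Finset.sum_congr rfl fun m _ => ?_
    rw [Complex.star_def, Complex.mul_conj]
    push_cast; ring
  · have : ¬ ((b : ℕ) + 1 = b' + 1) := fun h => hb (Fin.ext (by omega))
    simp only [hb, this, if_false, Matrix.one_apply_ne hb, mul_zero, add_zero]
    rw [Finset.mul_sum]
    refine Finset.sum_congr rfl fun l _ => ?_
    rw [Finset.mul_sum]
    refine Finset.sum_congr rfl fun m _ => ?_
    ring

end model

lemma psi_herm {B L K : ℕ} (lam : Fin L → Fin K → ℝ) (σ2 ξ κ δ : ℝ)
    (x : Fin L → Fin K → Fin B → ℂ) : (PsiMat lam σ2 ξ κ δ x)ᴴ = PsiMat lam σ2 ξ κ δ x := by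
  have hX : ∀ v : Fin B → ℂ, (Xmat κ δ v)ᴴ = Xmat κ δ v := by
    intro v
    ext b b'
    simp only [Matrix.conjTranspose_apply, Xmat, Matrix.of_apply]
    by_cases h : b = b'
    · subst h; simp
    · rw [if_neg h, if_neg (Ne.symm h), abs_sub_comm]
      simp only [star_mul', star_star, Complex.star_def, Complex.conj_ofReal, Complex.conj_conj]
      ring
  simp [PsiMat, Matrix.conjTranspose_sum, hX]

lemma inv_mul_inv {n : ℕ} (A : Matrix (Fin n) (Fin n) ℂ) : A⁻¹ * A * A⁻¹ = A⁻¹ := by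
  by_cases h : IsUnit A.det
  · rw [Matrix.nonsing_inv_mul A h, one_mul]
  · rw [Matrix.nonsing_inv_apply_not_isUnit A h]; simp

end MIMOModel

/-- **Squared norm of the MRC filter (Theorem 2, eq. (9)).** With the MRC filter
`v_{jk}(t) = ĥ_{jjk}(t)`,
`E[‖v_{jk}(t)‖²] = N λ_{jjk}² x̃_{jk}ᴴ D_{δ(t)} Ψ_j⁻¹ D_{δ(t)}ᴴ x̃_{jk}`. -/
theorem mrc_squared_norm
    {Ω : Type*} [MeasureSpace Ω] [IsProbabilityMeasure (ℙ : Measure Ω)]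
    {N B L K : ℕ} {lam : Fin L → Fin K → ℝ} {σ2 ξ κ δ : ℝ}
    {x : Fin L → Fin K → Fin B → ℂ}
    (M : MIMOModel Ω N B L K lam σ2 ξ κ δ x)
    (hlam : ∀ l k, 0 < lam l k) (hσ2 : 0 < σ2) (hξ : 1 ≤ ξ) (hκ : 0 ≤ κ) (hδ : 0 ≤ δ)
    (t : ℕ) (ht : B < t) (j : Fin L) :
    ∀ k : Fin K,
      ((∫ ω, ∑ n, Complex.normSq (M.hHat j k t n ω) : ℝ) : ℂ)
        = (N : ℂ) * ((lam j k : ℝ) : ℂ) ^ 2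
          * (star (x j k) ⬝ᵥ (Dmat δ t B * (PsiMat lam σ2 ξ κ δ x)⁻¹
              * (Dmat δ t B)ᴴ).mulVec (x j k)) := by
  intro k
  have hv : 0 ≤ σ2 * ξ := by positivity
  set Ψ := PsiMat lam σ2 ξ κ δ x with hΨ
  set D := Dmat δ t B
  set c := Matrix.vecMul (star (x j k)) (D * Ψ⁻¹) with hc
  have hm : ∀ n, MemLp (M.hHat j k t n) 2 (ℙ : Measure Ω) := fun n =>
    (memLp_finsetSum _ fun b _ => (M.y_memLp n b).const_mul _).const_mul _
  have key : ∀ n, ((∫ ω, Complex.normSq (M.hHat j k t n ω) : ℝ) : ℂ)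
      = ((lam j k : ℝ) : ℂ) ^ 2 * (Matrix.vecMul c Ψ ⬝ᵥ star c) := by
    intro n
    rw [← integral_complex_ofReal]
    have e : ∀ ω, ((Complex.normSq (M.hHat j k t n ω) : ℝ) : ℂ) = ((lam j k : ℝ) : ℂ) ^ 2 *
        ((∑ b, c b * M.y n b ω) * star (∑ b, c b * M.y n b ω)) := by
      intro ω
      rw [← Complex.mul_conj]
      simp only [MIMOModel.hHat, map_mul, Complex.conj_ofReal, Complex.star_def]
      ring
    simp_rw [e]
    rw [integral_const_mul, MIMOModel.sum_gram (fun b => M.y_memLp n b)]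
    simp_rw [M.y_cov hlam hδ hv]
    congr 1
    simp only [dotProduct, Matrix.vecMul, Finset.sum_mul]
    rw [Finset.sum_comm]
    refine Finset.sum_congr rfl fun b _ => Finset.sum_congr rfl fun b' _ => ?_
    simp only [Pi.star_apply]
    ring
  rw [integral_finsetSum _ fun n _ => MIMOModel.normSq_int (hm n)]
  push_cast
  simp_rw [key]
  rw [Finset.sum_const, Finset.card_univ, Fintype.card_fin, nsmul_eq_mul, mul_assoc]
  congr 2
  have hs : star c = (Ψ⁻¹ * Dᴴ).mulVec (x j k) := by
    rw [hc, Matrix.star_vecMul, star_star, Matrix.conjTranspose_mul,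
      Matrix.conjTranspose_nonsing_inv, MIMOModel.psi_herm]
  rw [hs, hc, Matrix.vecMul_vecMul, ← Matrix.dotProduct_mulVec, Matrix.mulVec_mulVec]
  congr 2
  calc D * Ψ⁻¹ * Ψ * (Ψ⁻¹ * Dᴴ) = D * (Ψ⁻¹ * Ψ * Ψ⁻¹) * Dᴴ := by simp only [mul_assoc]
    _ = _ := by rw [MIMOModel.inv_mul_inv]
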